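/- Suppose that every eigenvalue of ψ is a Weil number of weight j (relative to q) for some integer j. Then there exists a unique increasing family (W_i H)_{i ∈ ℤ} of ψ-invariant K-subspaces of H with W_i H = 0 for all sufficiently small i and W_i H = H for all sufficiently large i, such that for each i the quotient W_i H / W_{i-1} H, with the endomorphism induced by ψ, is pure of weight i. -/

import Mathlib

/-!
Let `W i` consist of the vectors killed by `f(ψ)` for some polynomial `f` over `K` all of whose
roots are Weil numbers of weight at most `i`. The weight of a Weil number is unique and is shared by
its conjugates over `K`. The latter makes minimal polynomials over `K` available as annihilators,
so the eigenvalues on `W i / W (i - 1)` have weight at most `i` but not at most `i - 1`. For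
uniqueness, let `U` be any weight filtration. Going up from `0`, products of the characteristic
polynomials of its graded pieces show `U i ≤ W i`; going down from `H`, a polynomial with roots of
weight at most `i` is invertible on each graded piece of weight `j > i`, so `W i ≤ U i`.
-/

open Polynomial

noncomputable section

/-- `α` is a Weil number of weight `i` relative to `q`: it is algebraic over `ℚ` and every
complex root of its minimal polynomial over `ℚ` has absolute value `q ^ (i / 2)`. -/
def IsWeilNumber {F : Type*} [Field F] [CharZero F] (q : ℕ) (i : ℤ) (α : F) : Prop :=
  IsAlgebraic ℚ α ∧
    ∀ z : ℂ, aeval z (minpoly ℚ α) = 0 → ‖z‖ = (q : ℝ) ^ ((i : ℝ) / 2)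

/-- `(H, ψ)` is pure of weight `i` (relative to `q`): every eigenvalue of `ψ`, i.e. every root
of its characteristic polynomial in a fixed algebraic closure of `K`, is a Weil number of
weight `i`. -/
def IsPureOfWeight (q : ℕ) (i : ℤ) {K : Type*} [Field K] [CharZero K]
    {H : Type*} [AddCommGroup H] [Module K H] [FiniteDimensional K H]
    (ψ : H →ₗ[K] H) : Prop :=
  ∀ α : AlgebraicClosure K, aeval α (LinearMap.charpoly ψ) = 0 → IsWeilNumber q i α

/-- The endomorphism induced by `ψ` on the quotient `B ⧸ A` of two nested `ψ`-invariant
submodules `A ≤ B`. -/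
def quotRestrict {K H : Type*} [Field K] [AddCommGroup H] [Module K H]
    (ψ : H →ₗ[K] H) (A B : Submodule K H)
    (hA : ∀ x ∈ A, ψ x ∈ A) (hB : ∀ x ∈ B, ψ x ∈ B) (_hAB : A ≤ B) :
    (B ⧸ A.comap B.subtype) →ₗ[K] (B ⧸ A.comap B.subtype) :=
  Submodule.mapQ _ _ (ψ.restrict hB) (fun x hx => hA x.1 hx)

/-- A weight filtration on `(H, ψ)` relative to `q`: an increasing family of `ψ`-invariant
subspaces, equal to `0` for all sufficiently small indices and to `H` for all sufficiently
large indices, whose `i`-th graded quotient is pure of weight `i` for every `i`. -/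
structure IsWeightFiltration (q : ℕ) {K : Type*} [Field K] [CharZero K]
    {H : Type*} [AddCommGroup H] [Module K H] [FiniteDimensional K H]
    (ψ : H →ₗ[K] H) (W : ℤ → Submodule K H) : Prop where
  mono : Monotone W
  eventually_bot : ∃ m : ℤ, ∀ i ≤ m, W i = ⊥
  eventually_top : ∃ n : ℤ, ∀ i : ℤ, n ≤ i → W i = ⊤
  inv : ∀ i, ∀ x ∈ W i, ψ x ∈ W i
  pure : ∀ i : ℤ, IsPureOfWeight q i
    (quotRestrict ψ (W (i - 1)) (W i) (inv (i - 1)) (inv i)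
      (mono (by omega : (i : ℤ) - 1 ≤ i)))

section KernelsOfPolynomials

variable {K V L : Type*} [Field K] [AddCommGroup V] [Module K V] [Field L] [Algebra K L]

theorem aeval_apply_of_semiconj {R M N : Type*} [CommRing R] [AddCommGroup M] [Module R M]
    [AddCommGroup N] [Module R N] {φ : Module.End R M} {ψ : Module.End R N} {T : M →ₗ[R] N}
    (h : ψ ∘ₗ T = T ∘ₗ φ) (f : R[X]) (x : M) : aeval ψ f (T x) = T (aeval φ f x) := by
  have pow_apply (n : ℕ) : (ψ ^ n) (T x) = T ((φ ^ n) x) :=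
    LinearMap.congr_fun (Module.End.commute_pow_left_of_commute h n) x
  simp only [aeval_endomorphism, Polynomial.sum_def, map_sum, map_smul, pow_apply]

theorem ker_aeval_ne_bot_of_root_charpoly [FiniteDimensional K V] {ψ : Module.End K V} {α : L}
    (hα : aeval α ψ.charpoly = 0) {p : K[X]} (hp : aeval α p = 0) :
    LinearMap.ker (aeval ψ p) ≠ ⊥ := by
  intro hker
  have isUnit_baseChange : IsUnit (aeval (ψ.baseChange L) (p.map (algebraMap K L))) := by
    have := ((LinearMap.isUnit_iff_ker_eq_bot _).2 hker).map (Module.End.baseChangeHom K L V)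
    rwa [← aeval_algHom_apply, ← aeval_map_algebraMap L] at this
  have mem_spectrum : α ∈ spectrum L (ψ.baseChange L) := by
    rwa [Module.End.mem_spectrum_iff_isRoot_charpoly, LinearMap.charpoly_baseChange, IsRoot.def,
      eval_map_algebraMap]
  have zero_mem := spectrum.subset_polynomial_aeval (ψ.baseChange L) (p.map (algebraMap K L))
    ⟨α, mem_spectrum, by simpa only [eval_map_algebraMap] using hp⟩
  exact spectrum.zero_notMem L isUnit_baseChange zero_mem

theorem aeval_eq_zero_of_minpoly_aeval_apply_eq_zero {ψ : Module.End K V} {α : L}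
    (hα : IsIntegral K α) {v : V} (hv : v ≠ 0) (hmin : aeval ψ (minpoly K α) v = 0) {f : K[X]}
    (hf : aeval ψ f v = 0) : aeval α f = 0 := by
  refine aeval_eq_zero_of_dvd_aeval_eq_zero ?_ (minpoly.aeval K α)
  rw [(minpoly.irreducible hα).dvd_iff_not_isCoprime]
  intro hcoprime
  exact hv (Submodule.disjoint_def.1 (disjoint_ker_aeval_of_isCoprime ψ hcoprime) v hmin hf)

end KernelsOfPolynomials

section SpectralSubspace

variable {K V L : Type*} [Field K] [AddCommGroup V] [Module K V] [Field L] [Algebra K L]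

variable (K) in
/-- The multiplicative set of polynomials over `K` all of whose roots in `L` lie in `s`. An
algebraically closed `L` is intended, so that no root escapes the condition. -/
def polynomialsWithRootsIn (s : Set L) : Submonoid K[X] where
  carrier := {f | ∀ α : L, aeval α f = 0 → α ∈ s}
  one_mem' α h := by simp at h
  mul_mem' {f g} hf hg α h := by
    rw [map_mul, mul_eq_zero] at h
    exact h.elim (hf α) (hg α)

theorem polynomialsWithRootsIn_mono {s t : Set L} (hst : s ⊆ t) :
    polynomialsWithRootsIn K s ≤ polynomialsWithRootsIn K t :=
  fun _ hf α hα => hst (hf α hα)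

theorem minpoly_mem_polynomialsWithRootsIn {s : Set L}
    (hs : ∀ α ∈ s, ∀ β, IsConjRoot K α β → β ∈ s) {α : L} (hα : IsIntegral K α) (hαs : α ∈ s) :
    minpoly K α ∈ polynomialsWithRootsIn K s :=
  fun β hβ => hs α hαs β (isConjRoot_of_aeval_eq_zero hα hβ)

theorem isCoprime_of_mem_polynomialsWithRootsIn_compl [IsAlgClosed L] {s : Set L} {f g : K[X]}
    (hf : f ∈ polynomialsWithRootsIn K s) (hg : g ∈ polynomialsWithRootsIn K sᶜ) :
    IsCoprime f g := by
  rw [isCoprime_iff_aeval_ne_zero_of_isAlgClosed K L]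
  intro α
  by_contra! h
  exact hg α h.2 (hf α h.1)

/-- The part of `V` belonging to the eigenvalues of `ψ` in `s`: the vectors killed by `f(ψ)` for
some polynomial `f` over `K` with all its roots in `s`. When `s` is stable under conjugation over
`K`, it is the `K`-form of the sum of the generalized eigenspaces of the eigenvalues in `s`; the
encoding by annihilating polynomials avoids any descent from `L` to `K`. -/
def spectralSubspace (ψ : Module.End K V) (s : Set L) : Submodule K V :=
  (Submodule.torsion' K (Module.AEval' ψ) (polynomialsWithRootsIn K s)).comap
    (Module.AEval'.of ψ).toLinearMap

theorem mem_spectralSubspace {ψ : Module.End K V} {s : Set L} {x : V} :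
    x ∈ spectralSubspace ψ s ↔ ∃ f ∈ polynomialsWithRootsIn K s, aeval ψ f x = 0 :=
  ⟨fun ⟨⟨f, hf⟩, hfx⟩ => ⟨f, hf, hfx⟩, fun ⟨f, hf, hfx⟩ => ⟨⟨f, hf⟩, hfx⟩⟩

theorem spectralSubspace_mono (ψ : Module.End K V) {s t : Set L} (hst : s ⊆ t) :
    spectralSubspace ψ s ≤ spectralSubspace ψ t := by
  intro x hx
  obtain ⟨f, hf, hfx⟩ := mem_spectralSubspace.1 hx
  exact mem_spectralSubspace.2 ⟨f, polynomialsWithRootsIn_mono hst hf, hfx⟩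

theorem map_mem_spectralSubspace {ψ : Module.End K V} {s : Set L} {x : V}
    (hx : x ∈ spectralSubspace ψ s) : ψ x ∈ spectralSubspace ψ s := by
  obtain ⟨f, hf, hfx⟩ := mem_spectralSubspace.1 hx
  exact mem_spectralSubspace.2 ⟨f, hf, by rw [aeval_apply_of_semiconj rfl, hfx, map_zero]⟩

theorem mem_spectralSubspace_of_aeval_apply_mem {ψ : Module.End K V} {s : Set L} {f : K[X]}
    (hf : f ∈ polynomialsWithRootsIn K s) {x : V} (hx : aeval ψ f x ∈ spectralSubspace ψ s) :
    x ∈ spectralSubspace ψ s := by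
  obtain ⟨g, hg, hgx⟩ := mem_spectralSubspace.1 hx
  exact mem_spectralSubspace.2 ⟨g * f, mul_mem hg hf, by rwa [map_mul, Module.End.mul_apply]⟩

theorem spectralSubspace_eq_top_iff [FiniteDimensional K V] {ψ : Module.End K V} {s : Set L} :
    spectralSubspace ψ s = ⊤ ↔ ψ.charpoly ∈ polynomialsWithRootsIn K s := by
  constructor
  · intro htop α hα
    obtain ⟨v, hmin, hv⟩ := Submodule.exists_mem_ne_zero_of_ne_bot
      (ker_aeval_ne_bot_of_root_charpoly hα (minpoly.aeval K α))
    obtain ⟨f, hf, hfv⟩ := mem_spectralSubspace.1 (htop ▸ Submodule.mem_top : v ∈ _)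
    exact hf α (aeval_eq_zero_of_minpoly_aeval_apply_eq_zero
      ⟨ψ.charpoly, ψ.charpoly_monic, hα⟩ hv hmin hfv)
  · intro hs
    refine eq_top_iff.2 fun x _ => mem_spectralSubspace.2 ⟨ψ.charpoly, hs, ?_⟩
    rw [LinearMap.aeval_self_charpoly, LinearMap.zero_apply]

theorem spectralSubspace_eq_bot_of_charpoly_mem [IsAlgClosed L] [FiniteDimensional K V]
    {ψ : Module.End K V} {s : Set L} (hψ : ψ.charpoly ∈ polynomialsWithRootsIn K sᶜ) :
    spectralSubspace ψ s = ⊥ := by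
  refine (Submodule.eq_bot_iff _).2 fun x hx => ?_
  obtain ⟨f, hf, hfx⟩ := mem_spectralSubspace.1 hx
  have hdisj := disjoint_ker_aeval_of_isCoprime ψ
    (isCoprime_of_mem_polynomialsWithRootsIn_compl hf hψ)
  rw [LinearMap.aeval_self_charpoly, LinearMap.ker_zero, disjoint_top] at hdisj
  exact (Submodule.eq_bot_iff _).1 hdisj x hfx

theorem charpoly_mem_of_spectralSubspace_eq_bot [FiniteDimensional K V] {ψ : Module.End K V}
    {s : Set L} (hs : ∀ α ∈ s, ∀ β, IsConjRoot K α β → β ∈ s) (hbot : spectralSubspace ψ s = ⊥) :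
    ψ.charpoly ∈ polynomialsWithRootsIn K sᶜ := by
  intro α hα hαs
  obtain ⟨v, hmin, hv⟩ := Submodule.exists_mem_ne_zero_of_ne_bot
    (ker_aeval_ne_bot_of_root_charpoly hα (minpoly.aeval K α))
  have hmem : v ∈ spectralSubspace ψ s := mem_spectralSubspace.2
    ⟨_, minpoly_mem_polynomialsWithRootsIn hs ⟨ψ.charpoly, ψ.charpoly_monic, hα⟩ hαs, hmin⟩
  exact hv ((Submodule.eq_bot_iff _).1 hbot v hmem)

end SpectralSubspace

section QuotRestrict

variable {K V L : Type*} [Field K] [AddCommGroup V] [Module K V] [Field L] [Algebra K L]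
  {ψ : Module.End K V} {A B : Submodule K V} {hA : ∀ x ∈ A, ψ x ∈ A} {hB : ∀ x ∈ B, ψ x ∈ B}
  {hAB : A ≤ B} {s : Set L}

theorem aeval_quotRestrict_mk_eq_zero_iff {f : K[X]} {x : B} :
    aeval (quotRestrict ψ A B hA hB hAB) f (Submodule.Quotient.mk x) = 0 ↔ aeval ψ f x ∈ A := by
  have aeval_mk : aeval (quotRestrict ψ A B hA hB hAB) f (Submodule.Quotient.mk x) =
      Submodule.Quotient.mk (aeval (ψ.restrict hB) f x) :=
    aeval_apply_of_semiconj (T := (A.comap B.subtype).mkQ) rfl f x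
  have aeval_coe : aeval ψ f x = aeval (ψ.restrict hB) f x :=
    aeval_apply_of_semiconj (T := B.subtype) rfl f x
  rw [aeval_mk, aeval_coe, Submodule.Quotient.mk_eq_zero, Submodule.mem_comap,
    Submodule.subtype_apply]

theorem mk_mem_spectralSubspace_quotRestrict_iff {x : B} :
    Submodule.Quotient.mk x ∈ spectralSubspace (quotRestrict ψ A B hA hB hAB) s ↔
      ∃ f ∈ polynomialsWithRootsIn K s, aeval ψ f x ∈ A := by
  simp only [mem_spectralSubspace, aeval_quotRestrict_mk_eq_zero_iff]

theorem spectralSubspace_quotRestrict_eq_top (h : B ≤ spectralSubspace ψ s) :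
    spectralSubspace (quotRestrict ψ A B hA hB hAB) s = ⊤ := by
  refine eq_top_iff.2 fun y _ => ?_
  obtain ⟨x, rfl⟩ := Submodule.Quotient.mk_surjective _ y
  obtain ⟨f, hf, hfx⟩ := mem_spectralSubspace.1 (h x.2)
  exact mk_mem_spectralSubspace_quotRestrict_iff.2 ⟨f, hf, hfx ▸ A.zero_mem⟩

theorem spectralSubspace_quotRestrict_eq_bot (h : A = spectralSubspace ψ s) :
    spectralSubspace (quotRestrict ψ A B hA hB hAB) s = ⊥ := by
  refine (Submodule.eq_bot_iff _).2 fun y hy => ?_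
  obtain ⟨x, rfl⟩ := Submodule.Quotient.mk_surjective _ y
  obtain ⟨f, hf, hfx⟩ := mk_mem_spectralSubspace_quotRestrict_iff.1 hy
  rw [Submodule.Quotient.mk_eq_zero, Submodule.mem_comap, Submodule.subtype_apply, h]
  exact mem_spectralSubspace_of_aeval_apply_mem hf (h ▸ hfx)

theorem le_spectralSubspace_of_quotRestrict_eq_top (hAs : A ≤ spectralSubspace ψ s)
    (htop : spectralSubspace (quotRestrict ψ A B hA hB hAB) s = ⊤) :
    B ≤ spectralSubspace ψ s := by
  intro x hx
  have hmem : Submodule.Quotient.mk ⟨x, hx⟩ ∈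
      spectralSubspace (quotRestrict ψ A B hA hB hAB) s := htop ▸ Submodule.mem_top
  obtain ⟨f, hf, hfx⟩ := mk_mem_spectralSubspace_quotRestrict_iff.1 hmem
  exact mem_spectralSubspace_of_aeval_apply_mem hf (hAs hfx)

theorem spectralSubspace_le_of_quotRestrict_eq_bot (hsB : spectralSubspace ψ s ≤ B)
    (hbot : spectralSubspace (quotRestrict ψ A B hA hB hAB) s = ⊥) :
    spectralSubspace ψ s ≤ A := by
  intro x hx
  obtain ⟨f, hf, hfx⟩ := mem_spectralSubspace.1 hx
  have hmem : Submodule.Quotient.mk ⟨x, hsB hx⟩ ∈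
      spectralSubspace (quotRestrict ψ A B hA hB hAB) s :=
    mk_mem_spectralSubspace_quotRestrict_iff.2 ⟨f, hf, hfx ▸ A.zero_mem⟩
  rwa [hbot, Submodule.mem_bot, Submodule.Quotient.mk_eq_zero] at hmem

end QuotRestrict

section WeilNumbers

variable {F : Type*} [Field F] [CharZero F] {q : ℕ}

theorem IsWeilNumber.weight_unique (hq : 1 < q) {i j : ℤ} {α : F} (hi : IsWeilNumber q i α)
    (hj : IsWeilNumber q j α) : i = j := by
  obtain ⟨z, hz⟩ := IsAlgClosed.exists_aeval_eq_zero ℂ (minpoly ℚ α)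
    (minpoly.degree_pos hi.1.isIntegral).ne'
  have hpow : (q : ℝ) ^ ((i : ℝ) / 2) = (q : ℝ) ^ ((j : ℝ) / 2) :=
    (hi.2 z hz).symm.trans (hj.2 z hz)
  have hq' : (1 : ℝ) < q := mod_cast hq
  have hdiv := (Real.rpow_right_inj (by positivity) hq'.ne').1 hpow
  exact_mod_cast (div_left_inj' two_ne_zero).1 hdiv

theorem IsWeilNumber.of_isConjRoot (K : Type*) [Field K] [CharZero K] [Algebra K F] {i : ℤ}
    {α β : F} (hα : IsWeilNumber q i α) (h : IsConjRoot K α β) : IsWeilNumber q i β := by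
  have hℚ : IsConjRoot ℚ α β := h.of_isScalarTower hα.1.isIntegral
  exact ⟨(hℚ.isIntegral hα.1.isIntegral).isAlgebraic, isConjRoot_def.1 hℚ ▸ hα.2⟩

/-- The elements of `F` that are Weil numbers, relative to `q`, of some weight at most `i`. -/
def weilNumbersLE (F : Type*) [Field F] [CharZero F] (q : ℕ) (i : ℤ) : Set F :=
  {α | ∃ j ≤ i, IsWeilNumber q j α}

theorem weilNumbersLE_mono : Monotone (weilNumbersLE F q) :=
  fun _ _ hik _ ⟨j, hj, hα⟩ => ⟨j, hj.trans hik, hα⟩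

theorem IsWeilNumber.mem_weilNumbersLE_iff (hq : 1 < q) {i j : ℤ} {α : F}
    (hα : IsWeilNumber q j α) : α ∈ weilNumbersLE F q i ↔ j ≤ i :=
  ⟨fun ⟨_, hk, hαk⟩ => hα.weight_unique hq hαk ▸ hk, fun hji => ⟨j, hji, hα⟩⟩

theorem mem_weilNumbersLE_of_isConjRoot (K : Type*) [Field K] [CharZero K] [Algebra K F] {i : ℤ} :
    ∀ α ∈ weilNumbersLE F q i, ∀ β, IsConjRoot K α β → β ∈ weilNumbersLE F q i :=
  fun _ ⟨j, hj, hα⟩ _ h => ⟨j, hj, hα.of_isConjRoot K h⟩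

theorem isWeilNumber_of_mem_weilNumbersLE_of_notMem {i : ℤ} {α : F}
    (hα : α ∈ weilNumbersLE F q i) (hα' : α ∉ weilNumbersLE F q (i - 1)) : IsWeilNumber q i α := by
  obtain ⟨j, hj, hαj⟩ := hα
  obtain rfl : j = i := by
    by_contra hne
    exact hα' ⟨j, by lia, hαj⟩
  exact hαj

theorem exists_weight_bounds_of_finite {s : Set F} (hs : s.Finite)
    (hweil : ∀ α ∈ s, ∃ j : ℤ, IsWeilNumber q j α) :
    ∃ m n : ℤ, ∀ α ∈ s, ∃ j ∈ Set.Icc m n, IsWeilNumber q j α := by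
  choose! weight hweight using hweil
  obtain ⟨m, hm⟩ := (hs.image weight).bddBelow
  obtain ⟨n, hn⟩ := (hs.image weight).bddAbove
  exact ⟨m, n, fun α hα => ⟨weight α, ⟨hm ⟨α, hα, rfl⟩, hn ⟨α, hα, rfl⟩⟩, hweight α hα⟩⟩

end WeilNumbers

section WeightFiltration

variable {K : Type*} [Field K] [CharZero K] {H : Type*} [AddCommGroup H] [Module K H]
  {q : ℕ} {ψ : Module.End K H}

/-- The candidate for the weight filtration of `(H, ψ)`: its `i`-th step is the part of `H`
belonging to the eigenvalues that are Weil numbers of weight at most `i`. -/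
def weightFiltration (q : ℕ) (ψ : Module.End K H) (i : ℤ) : Submodule K H :=
  spectralSubspace ψ (weilNumbersLE (AlgebraicClosure K) q i)

theorem weightFiltration_mono : Monotone (weightFiltration q ψ) :=
  fun _ _ hij => spectralSubspace_mono ψ (weilNumbersLE_mono hij)

variable [FiniteDimensional K H]

theorem isPureOfWeight_quotRestrict_weightFiltration (i : ℤ)
    {hinv₁ : ∀ x ∈ weightFiltration q ψ (i - 1), ψ x ∈ weightFiltration q ψ (i - 1)}
    {hinv₂ : ∀ x ∈ weightFiltration q ψ i, ψ x ∈ weightFiltration q ψ i}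
    {hle : weightFiltration q ψ (i - 1) ≤ weightFiltration q ψ i} :
    IsPureOfWeight q i (quotRestrict ψ _ _ hinv₁ hinv₂ hle) := by
  intro α hα
  have hmem := spectralSubspace_eq_top_iff.1 (spectralSubspace_quotRestrict_eq_top
    (hA := hinv₁) (hB := hinv₂) (hAB := hle) le_rfl)
  have hnotMem := charpoly_mem_of_spectralSubspace_eq_bot (mem_weilNumbersLE_of_isConjRoot K)
    (spectralSubspace_quotRestrict_eq_bot (hA := hinv₁) (hB := hinv₂) (hAB := hle) rfl)
  exact isWeilNumber_of_mem_weilNumbersLE_of_notMem (hmem α hα) (hnotMem α hα)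

theorem isWeightFiltration_weightFiltration (hq : 1 < q)
    (hψ : ∀ α : AlgebraicClosure K, aeval α ψ.charpoly = 0 → ∃ j : ℤ, IsWeilNumber q j α) :
    IsWeightFiltration q ψ (weightFiltration q ψ) := by
  have hfin : {α : AlgebraicClosure K | aeval α ψ.charpoly = 0}.Finite :=
    (ψ.charpoly.rootSet_finite _).subset fun _ => (mem_rootSet_of_ne ψ.charpoly_monic.ne_zero).2
  obtain ⟨m, n, hmn⟩ := exists_weight_bounds_of_finite hfin hψ
  refine ⟨weightFiltration_mono, ⟨m - 1, fun i hi => ?_⟩, ⟨n, fun i hi => ?_⟩,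
    fun _ _ => map_mem_spectralSubspace, fun i => isPureOfWeight_quotRestrict_weightFiltration i⟩
  · refine spectralSubspace_eq_bot_of_charpoly_mem fun α hα => ?_
    obtain ⟨j, ⟨hmj, -⟩, hαj⟩ := hmn α hα
    rw [Set.mem_compl_iff, hαj.mem_weilNumbersLE_iff hq]
    lia
  · refine spectralSubspace_eq_top_iff.2 fun α hα => ?_
    obtain ⟨j, ⟨-, hjn⟩, hαj⟩ := hmn α hα
    exact ⟨j, hjn.trans hi, hαj⟩

theorem IsWeightFiltration.le_weightFiltration {W : ℤ → Submodule K H}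
    (hW : IsWeightFiltration q ψ W) (i : ℤ) : W i ≤ weightFiltration q ψ i := by
  have hstep (i : ℤ) (ih : W (i - 1) ≤ weightFiltration q ψ (i - 1)) :
      W i ≤ weightFiltration q ψ i :=
    le_spectralSubspace_of_quotRestrict_eq_top (ih.trans (weightFiltration_mono (by lia)))
      (spectralSubspace_eq_top_iff.2 fun α hα => ⟨i, le_rfl, hW.pure i α hα⟩)
  obtain ⟨m, hm⟩ := hW.eventually_bot
  rcases le_total i m with him | hmi
  · exact (hm i him).trans_le bot_le
  · induction i, hmi using Int.leInduction with
    | base => exact (hm m le_rfl).trans_le bot_le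
    | succ i _ ih => exact hstep (i + 1) (by rwa [add_sub_cancel_right])

theorem IsWeightFiltration.weightFiltration_le (hq : 1 < q) {W : ℤ → Submodule K H}
    (hW : IsWeightFiltration q ψ W) (i : ℤ) : weightFiltration q ψ i ≤ W i := by
  have hstep (j : ℤ) (hij : i < j) (ih : weightFiltration q ψ i ≤ W j) :
      weightFiltration q ψ i ≤ W (j - 1) := by
    have hcharpoly : (quotRestrict ψ (W (j - 1)) (W j) (hW.inv _) (hW.inv _)
        (hW.mono (by lia))).charpoly ∈
          polynomialsWithRootsIn K (weilNumbersLE (AlgebraicClosure K) q i)ᶜ := by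
      intro α hα
      rw [Set.mem_compl_iff, (hW.pure j α hα).mem_weilNumbersLE_iff hq]
      lia
    exact spectralSubspace_le_of_quotRestrict_eq_bot ih
      (spectralSubspace_eq_bot_of_charpoly_mem hcharpoly)
  obtain ⟨n, hn⟩ := hW.eventually_top
  suffices ∀ j ≤ max i n, i ≤ j → weightFiltration q ψ i ≤ W j from this i (le_max_left i n) le_rfl
  intro j hj hij
  induction j, hj using Int.leInductionDown with
  | base => exact le_top.trans_eq (hn _ (le_max_right i n)).symm
  | pred j _ ih => exact hstep j (by lia) (ih (by lia))

theorem IsWeightFiltration.eq_weightFiltration (hq : 1 < q) {W : ℤ → Submodule K H}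
    (hW : IsWeightFiltration q ψ W) : W = weightFiltration q ψ :=
  funext fun i => le_antisymm (hW.le_weightFiltration i) (hW.weightFiltration_le hq i)

end WeightFiltration

theorem statement3_general {q : ℕ} (hq : 1 < q) {K : Type*} [Field K] [CharZero K]
    {H : Type*} [AddCommGroup H] [Module K H] [FiniteDimensional K H] {ψ : H →ₗ[K] H}
    (hψ : ∀ α : AlgebraicClosure K, aeval α (LinearMap.charpoly ψ) = 0 →
      ∃ j : ℤ, IsWeilNumber q j α) :
    ∃! W : ℤ → Submodule K H, IsWeightFiltration q ψ W :=
  ⟨weightFiltration q ψ, isWeightFiltration_weightFiltration hq hψ,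
    fun _ hW => hW.eq_weightFiltration hq⟩

/-- if every eigenvalue of `ψ` is a Weil number of some integral weight, then
`(H, ψ)` admits a unique weight filtration. -/
theorem statement3 (p n₀ : ℕ) (hp : p.Prime) (hn₀ : 0 < n₀)
    (K : Type*) [Field K] [CharZero K]
    (H : Type*) [AddCommGroup H] [Module K H] [FiniteDimensional K H]
    (ψ : H →ₗ[K] H)
    (hψ : ∀ α : AlgebraicClosure K, aeval α (LinearMap.charpoly ψ) = 0 →
      ∃ j : ℤ, IsWeilNumber (p ^ n₀) j α) :
    ∃! W : ℤ → Submodule K H, IsWeightFiltration (p ^ n₀) ψ W :=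
  statement3_general (Nat.one_lt_pow hn₀.ne' hp.one_lt) hψ

end
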